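/- (Hardy–Littlewood–Pólya) Let M > 0, let 0 < q₁ ≤ q₂, and let f, g ∈ L^{q₂}([0, M]) with decreasing rearrangements f* and g*. If ∫₀^s (f*(t))^{q₁} dt ≤ ∫₀^s (g*(t))^{q₁} dt for all 0 ≤ s ≤ M, then ∫₀^M |f|^{q₂} ds ≤ ∫₀^M |g|^{q₂} ds. -/

import Mathlib

open MeasureTheory Metric Set
open scoped ENNReal NNReal Pointwise

noncomputable section

/-- A bounded set `Ω ⊆ ℝⁿ` has `C¹` boundary if every boundary point admits a local `C¹`
defining function with nonvanishing gradient. -/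
def HasC1Boundary {n : ℕ} (Ω : Set (EuclideanSpace ℝ (Fin n))) : Prop :=
  ∀ x ∈ frontier Ω, ∃ (U : Set (EuclideanSpace ℝ (Fin n)))
    (f : EuclideanSpace ℝ (Fin n) → ℝ),
      IsOpen U ∧ x ∈ U ∧ ContDiff ℝ 1 f ∧ (∀ y ∈ U, fderiv ℝ f y ≠ 0) ∧
      Ω ∩ U = {y | y ∈ U ∧ f y < 0}

/-- Admissible (nontrivial) test functions for the Sobolev quotient on `Ω`; these form a dense
subclass of `W₀^{1,2}(Ω) \ {0}`. -/
def Admissible {n : ℕ} (Ω : Set (EuclideanSpace ℝ (Fin n)))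
    (f : EuclideanSpace ℝ (Fin n) → ℝ) : Prop :=
  ContDiff ℝ 1 f ∧ HasCompactSupport f ∧ tsupport f ⊆ Ω ∧ ∃ x, f x ≠ 0

/-- The Sobolev quotient `Φ_p(f) = ∫_Ω |∇f|² dm / (∫_Ω |f|^p dm)^{2/p}`. -/
def sobolevQuotient {n : ℕ} (p : ℝ) (Ω : Set (EuclideanSpace ℝ (Fin n)))
    (f : EuclideanSpace ℝ (Fin n) → ℝ) : ℝ :=
  (∫ x in Ω, ‖fderiv ℝ f x‖ ^ 2) / (∫ x in Ω, |f x| ^ p) ^ (2 / p)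

/-- The Sobolev constant `C_p(Ω)`. -/
def sobolevConstant {n : ℕ} (p : ℝ) (Ω : Set (EuclideanSpace ℝ (Fin n))) : ℝ :=
  sInf (sobolevQuotient p Ω '' {f | Admissible Ω f})

/-- `u` is a positive extremal function realizing `C_p(Ω)`. -/
def IsExtremal {n : ℕ} (p : ℝ) (Ω : Set (EuclideanSpace ℝ (Fin n)))
    (u : EuclideanSpace ℝ (Fin n) → ℝ) : Prop :=
  Admissible Ω u ∧ (∀ x ∈ Ω, 0 < u x) ∧
    sobolevQuotient p Ω u = sobolevConstant p Ω

/-- The distribution function `μ(t) = |{x ∈ Ω : u(x) > t}|`. -/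
def distFun {n : ℕ} (Ω : Set (EuclideanSpace ℝ (Fin n)))
    (u : EuclideanSpace ℝ (Fin n) → ℝ) (t : ℝ) : ℝ :=
  (volume {x | x ∈ Ω ∧ t < u x}).toReal

/-- The decreasing rearrangement `u*(s) = inf{t ≥ 0 : μ(t) < s}`. -/
def decRearrangement {n : ℕ} (Ω : Set (EuclideanSpace ℝ (Fin n)))
    (u : EuclideanSpace ℝ (Fin n) → ℝ) (s : ℝ) : ℝ :=
  sInf {t : ℝ | 0 ≤ t ∧ distFun Ω u t < s}

/-- `ω_n`, the volume of the unit ball in `ℝⁿ`. -/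
def unitBallVol (n : ℕ) : ℝ :=
  (volume (ball (0 : EuclideanSpace ℝ (Fin n)) 1)).toReal

/-- The Laplacian `Δf = ∑ᵢ ∂²f/∂xᵢ²`. -/
def laplacian {n : ℕ} (f : EuclideanSpace ℝ (Fin n) → ℝ)
    (x : EuclideanSpace ℝ (Fin n)) : ℝ :=
  ∑ i : Fin n, fderiv ℝ (fun y => fderiv ℝ f y (EuclideanSpace.single i 1)) x
    (EuclideanSpace.single i 1)

/-- The distribution function of a function `f` on the interval `[0, M]`. -/
def distFun1D (M : ℝ) (f : ℝ → ℝ) (t : ℝ) : ℝ :=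
  (volume {s | s ∈ Icc 0 M ∧ t < |f s|}).toReal

/-- The decreasing rearrangement of a function `f` on the interval `[0, M]`. -/
def decRearr1D (M : ℝ) (f : ℝ → ℝ) (s : ℝ) : ℝ :=
  sInf {t : ℝ | 0 ≤ t ∧ distFun1D M f t < s}

/-!
Since `f*` and `|f|` have the same law, everything takes place on the half-line. There
`(f*)^(q - p)` is nonincreasing, hence a mixture of indicators of initial intervals, and integrating
the hypothesis against it gives `∫ (f*)^q ≤ ∫ (g*)^p (f*)^(q - p)`. Hölder bounds the right-hand
side by `(∫ (g*)^q)^(p/q) (∫ (f*)^q)^(1 - p/q)`, and dividing by the last factor is the claim. The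
division needs `∫ (f*)^q < ∞`; truncating `f*` at a height `n` preserves the hypothesis and ensures
this, so `f ∈ L^q` comes out as a conclusion when `n → ∞`.
-/

open Filter ProbabilityTheory

section Rearrangement

variable {α E : Type*} [MeasurableSpace α] [NormedAddCommGroup E]

/-- The distribution function `t ↦ μ {‖f‖ > t}` of a function on a finite measure space. It is
real-valued, so it is meaningful only where these measures are finite. -/
def distributionFunction (μ : Measure α) (f : α → E) (t : ℝ) : ℝ :=
  μ.real {x | t < ‖f x‖}

/-- The decreasing rearrangement `f*` of a function on a finite measure space, of which
`decRearr1D` is the case of Lebesgue measure on `[0, M]`. As an infimum of reals, it is meaningful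
only for `s > 0`: at `s ≤ 0` the set is empty and the value is `0`. -/
def decreasingRearrangement (μ : Measure α) (f : α → E) (s : ℝ) : ℝ :=
  sInf {t | 0 ≤ t ∧ distributionFunction μ f t < s}

lemma decRearr1D_eq_decreasingRearrangement (M : ℝ) (f : ℝ → ℝ) :
    decRearr1D M f = decreasingRearrangement (volume.restrict (Icc 0 M)) f := by
  ext s
  simp only [decRearr1D, decreasingRearrangement, distFun1D, distributionFunction,
    measureReal_def, Measure.restrict_apply' measurableSet_Icc, Real.norm_eq_abs]
  congr! 7
  exact inter_comm _ _

variable {μ : Measure α} {f : α → E} {s t : ℝ}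

lemma decreasingRearrangement_nonneg : 0 ≤ decreasingRearrangement μ f s :=
  Real.sInf_nonneg fun _ ht ↦ ht.1

lemma decreasingRearrangement_le (ht : 0 ≤ t) (hts : distributionFunction μ f t < s) :
    decreasingRearrangement μ f s ≤ t :=
  csInf_le ⟨0, fun _ hu ↦ hu.1⟩ ⟨ht, hts⟩

variable [IsFiniteMeasure μ]

lemma antitone_distributionFunction : Antitone (distributionFunction μ f) := fun _ _ htu ↦
  measureReal_mono fun _ hx ↦ htu.trans_lt hx

lemma exists_gt_lt_distributionFunction (hs : 0 ≤ s) (h : s < distributionFunction μ f t) :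
    ∃ u > t, s < distributionFunction μ f u := by
  obtain ⟨u, hu_anti, hu_gt, hu_lim⟩ := exists_seq_strictAnti_tendsto t
  have h_mono : Monotone fun n ↦ {x | u n < ‖f x‖} := fun m n hmn x hx ↦
    (hu_anti.antitone hmn).trans_lt hx
  have h_union : {x | t < ‖f x‖} = ⋃ n, {x | u n < ‖f x‖} := by
    ext x
    simp only [mem_ofPred_eq, mem_iUnion]
    exact ⟨fun hx ↦ (hu_lim.eventually_lt_const hx).exists, fun ⟨n, hn⟩ ↦ (hu_gt n).trans hn⟩
  rw [distributionFunction, measureReal_def,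
    ← ENNReal.ofReal_lt_iff_lt_toReal hs (measure_ne_top _ _), h_union, h_mono.measure_iUnion,
    lt_iSup_iff] at h
  obtain ⟨n, hn⟩ := h
  exact ⟨u n, hu_gt n, (ENNReal.ofReal_lt_iff_lt_toReal hs (measure_ne_top _ _)).1 hn⟩

lemma exists_distributionFunction_lt (hf : AEStronglyMeasurable f μ) (hs : 0 < s) :
    ∃ t, 0 ≤ t ∧ distributionFunction μ f t < s := by
  have h_lim := tendsto_measure_iInter_atTop (μ := μ) (s := fun n : ℕ ↦ {x | (n : ℝ) < ‖f x‖})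
    (fun _ ↦ nullMeasurableSet_lt aemeasurable_const hf.norm.aemeasurable)
    (fun _ _ hmn x (hx : _ < ‖f x‖) ↦ (Nat.cast_le.2 hmn).trans_lt hx) ⟨0, measure_ne_top _ _⟩
  have h_inter : ⋂ n : ℕ, {x | (n : ℝ) < ‖f x‖} = ∅ :=
    eq_empty_of_forall_notMem fun x hx ↦
      let ⟨n, hn⟩ := exists_nat_ge ‖f x‖
      (mem_iInter.1 hx n).not_ge hn
  rw [h_inter, measure_empty] at h_lim
  obtain ⟨n, hn⟩ := (h_lim.eventually_lt_const (ENNReal.ofReal_pos.2 hs)).exists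
  exact ⟨n, n.cast_nonneg, (ENNReal.lt_ofReal_iff_toReal_lt (measure_ne_top _ _)).1 hn⟩

lemma antitoneOn_decreasingRearrangement (hf : AEStronglyMeasurable f μ) :
    AntitoneOn (decreasingRearrangement μ f) (Ioi 0) := fun _ hs _ _ hst ↦
  csInf_le_csInf ⟨0, fun _ hu ↦ hu.1⟩ (exists_distributionFunction_lt hf hs)
    fun _ hu ↦ ⟨hu.1, hu.2.trans_le hst⟩

lemma lt_decreasingRearrangement (hf : AEStronglyMeasurable f μ) (hs : 0 < s)
    (h : s < distributionFunction μ f t) : t < decreasingRearrangement μ f s := by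
  obtain ⟨u, htu, hu⟩ := exists_gt_lt_distributionFunction hs.le h
  refine htu.trans_le (le_csInf (exists_distributionFunction_lt hf hs) fun v hv ↦ ?_)
  exact (antitone_distributionFunction.reflect_lt (hv.2.trans hu)).le

lemma volume_lt_decreasingRearrangement (hf : AEStronglyMeasurable f μ) (ht : 0 ≤ t) :
    volume ({s | t < decreasingRearrangement μ f s} ∩ Ioc 0 (μ.real univ)) =
      μ {x | t < ‖f x‖} := by
  have h_mass : distributionFunction μ f t ≤ μ.real univ := measureReal_mono (subset_univ _)
  have h_upper : {s | t < decreasingRearrangement μ f s} ∩ Ioc 0 (μ.real univ) ⊆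
      Ioc 0 (distributionFunction μ f t) := fun s hs ↦
    ⟨hs.2.1, not_lt.1 fun hts ↦ (decreasingRearrangement_le ht hts).not_gt hs.1⟩
  have h_lower : Ioo 0 (distributionFunction μ f t) ⊆
      {s | t < decreasingRearrangement μ f s} ∩ Ioc 0 (μ.real univ) := fun s hs ↦
    ⟨lt_decreasingRearrangement hf hs.1 hs.2, hs.1, hs.2.le.trans h_mass⟩
  have h_volume : ENNReal.ofReal (distributionFunction μ f t) = μ {x | t < ‖f x‖} :=
    ofReal_measureReal
  rw [← h_volume]
  exact le_antisymm (by simpa using measure_mono (μ := volume) h_upper)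
    (by simpa using measure_mono (μ := volume) h_lower)

theorem identDistrib_decreasingRearrangement (hf : AEStronglyMeasurable f μ) :
    IdentDistrib (decreasingRearrangement μ f) (fun x ↦ ‖f x‖)
      (volume.restrict (Ioc 0 (μ.real univ))) μ := by
  have h_meas : AEMeasurable (decreasingRearrangement μ f)
      (volume.restrict (Ioc 0 (μ.real univ))) :=
    aemeasurable_restrict_of_antitoneOn measurableSet_Ioc
      ((antitoneOn_decreasingRearrangement hf).mono Ioc_subset_Ioi_self)
  have h_norm := hf.norm.aemeasurable
  have h_univ : volume.restrict (Ioc 0 (μ.real univ)) univ = μ univ := by simp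
  refine ⟨h_meas, h_norm, ext_of_generate_finite _
    (borel_eq_generateFrom_Ioi ℝ ▸ BorelSpace.measurable_eq) isPiSystem_Ioi ?_ ?_⟩
  · rintro _ ⟨t, rfl⟩
    rw [Measure.map_apply_of_aemeasurable h_meas measurableSet_Ioi,
      Measure.map_apply_of_aemeasurable h_norm measurableSet_Ioi]
    rcases le_or_gt 0 t with ht | ht
    · rw [Measure.restrict_apply' measurableSet_Ioc]
      exact volume_lt_decreasingRearrangement hf ht
    · have h_left : decreasingRearrangement μ f ⁻¹' Ioi t = univ :=
        eq_univ_of_forall fun _ ↦ ht.trans_le decreasingRearrangement_nonneg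
      have h_right : (fun x ↦ ‖f x‖) ⁻¹' Ioi t = univ :=
        eq_univ_of_forall fun _ ↦ ht.trans_le (norm_nonneg _)
      rw [h_left, h_right, h_univ]
  · rw [Measure.map_apply_of_aemeasurable h_meas .univ,
      Measure.map_apply_of_aemeasurable h_norm .univ, preimage_univ, preimage_univ, h_univ]

end Rearrangement

section Majorization

lemma measure_le_of_forall_Ioc {μ ν : Measure ℝ} [NullSingletonClass ν] {a b : ℝ} {S : Set ℝ}
    (hS : S ⊆ Ioc a b) (hS_lower : ∀ y ∈ S, Ioc a y ⊆ S)
    (h : ∀ s ∈ Icc a b, μ (Ioc a s) ≤ ν (Ioc a s)) : μ S ≤ ν S := by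
  rcases S.eq_empty_or_nonempty with rfl | ⟨x, hx⟩
  · simp
  have h_bdd : BddAbove S := ⟨b, fun y hy ↦ (hS hy).2⟩
  have h_sSup : sSup S ∈ Icc a b :=
    ⟨(hS hx).1.le.trans (le_csSup h_bdd hx), csSup_le ⟨x, hx⟩ fun y hy ↦ (hS hy).2⟩
  have h_Ioo : Ioo a (sSup S) ⊆ S := fun s hs ↦
    let ⟨y, hy, hsy⟩ := exists_lt_of_lt_csSup ⟨x, hx⟩ hs.2
    hS_lower y hy ⟨hs.1, hsy.le⟩
  calc μ S ≤ μ (Ioc a (sSup S)) := measure_mono fun y hy ↦ ⟨(hS hy).1, le_csSup h_bdd hy⟩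
    _ ≤ ν (Ioc a (sSup S)) := h _ h_sSup
    _ = ν (Ioo a (sSup S)) := measure_congr Ioo_ae_eq_Ioc.symm
    _ ≤ ν S := measure_mono h_Ioo

lemma setLIntegral_le_setLIntegral_of_antitoneOn {μ ν : Measure ℝ} [NullSingletonClass ν]
    {a b : ℝ} {w : ℝ → ℝ≥0} (hw : AntitoneOn w (Ioc a b))
    (h : ∀ s ∈ Icc a b, μ (Ioc a s) ≤ ν (Ioc a s)) :
    ∫⁻ s in Ioc a b, w s ∂μ ≤ ∫⁻ s in Ioc a b, w s ∂ν := by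
  have layer_cake (ρ : Measure ℝ) : ∫⁻ s in Ioc a b, w s ∂ρ =
      ∫⁻ u in Ioi (0 : ℝ), ρ ({s | u < w s} ∩ Ioc a b) := by
    have := lintegral_eq_lintegral_meas_lt (ρ.restrict (Ioc a b))
      (.of_forall fun s ↦ (w s).coe_nonneg)
      (aemeasurable_restrict_of_antitoneOn measurableSet_Ioc hw).coe_nnreal_real
    simpa only [ENNReal.ofReal_coe_nnreal, Measure.restrict_apply' measurableSet_Ioc] using this
  rw [layer_cake, layer_cake]
  refine lintegral_mono fun u ↦ measure_le_of_forall_Ioc inter_subset_right ?_ h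
  intro y hy s hs
  have h_mem : s ∈ Ioc a b := ⟨hs.1, hs.2.trans hy.2.2⟩
  exact ⟨lt_of_lt_of_le hy.1 (NNReal.coe_le_coe.2 (hw h_mem hy.2 hs.2)), h_mem⟩

lemma setLIntegral_mul_le_of_antitoneOn {A B : ℝ → ℝ≥0∞} {w : ℝ → ℝ≥0} {a b : ℝ}
    (hA : AEMeasurable A (volume.restrict (Ioc a b)))
    (hB : AEMeasurable B (volume.restrict (Ioc a b))) (hw : AntitoneOn w (Ioc a b))
    (h : ∀ s ∈ Icc a b, ∫⁻ t in Ioc a s, A t ≤ ∫⁻ t in Ioc a s, B t) :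
    ∫⁻ s in Ioc a b, A s * w s ≤ ∫⁻ s in Ioc a b, B s * w s := by
  have hw_meas := (aemeasurable_restrict_of_antitoneOn (μ := volume) measurableSet_Ioc
    hw).coe_nnreal_ennreal
  have := setLIntegral_le_setLIntegral_of_antitoneOn (μ := volume.withDensity A)
    (ν := volume.withDensity B) hw (by simpa only [withDensity_apply _ measurableSet_Ioc] using h)
  simpa only [restrict_withDensity measurableSet_Ioc,
    lintegral_withDensity_eq_lintegral_mul₀ hA hw_meas,
    lintegral_withDensity_eq_lintegral_mul₀ hB hw_meas, Pi.mul_apply] using this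

lemma lintegral_rpow_le_of_le_lintegral_mul_rpow {α : Type*} [MeasurableSpace α] {μ : Measure α}
    {F G : α → ℝ≥0∞} {p q : ℝ} (hF : AEMeasurable F μ) (hG : AEMeasurable G μ)
    (hp : 0 < p) (hpq : p ≤ q) (hF_top : ∫⁻ x, F x ^ q ∂μ ≠ ∞)
    (h : ∫⁻ x, F x ^ q ∂μ ≤ ∫⁻ x, G x ^ p * F x ^ (q - p) ∂μ) :
    ∫⁻ x, F x ^ q ∂μ ≤ ∫⁻ x, G x ^ q ∂μ := by
  have hq : 0 < q := hp.trans_le hpq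
  set X := ∫⁻ x, F x ^ q ∂μ
  set Y := ∫⁻ x, G x ^ q ∂μ
  rcases eq_or_ne X 0 with hX | hX
  · simp [hX]
  have h_weights : p / q + (q - p) / q = 1 := by field_simp; ring
  have h_hoelder : X ^ (p / q) * X ^ ((q - p) / q) ≤ Y ^ (p / q) * X ^ ((q - p) / q) :=
    calc X ^ (p / q) * X ^ ((q - p) / q) = X := by
          rw [← ENNReal.rpow_add _ _ hX hF_top, h_weights, ENNReal.rpow_one]
      _ ≤ ∫⁻ x, G x ^ p * F x ^ (q - p) ∂μ := h
      _ = ∫⁻ x, (G x ^ q) ^ (p / q) * (F x ^ q) ^ ((q - p) / q) ∂μ := by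
          simp only [← ENNReal.rpow_mul, mul_div_cancel₀ _ hq.ne']
      _ ≤ Y ^ (p / q) * X ^ ((q - p) / q) :=
          ENNReal.lintegral_mul_norm_pow_le (hG.pow_const q) (hF.pow_const q) (by positivity)
            (div_nonneg (sub_nonneg.2 hpq) hq.le) h_weights
  rw [ENNReal.mul_le_mul_iff_left (by simp [hX, hF_top]) (by simp [hX, hF_top])] at h_hoelder
  exact (ENNReal.rpow_le_rpow_iff (by positivity)).1 h_hoelder

lemma setLIntegral_rpow_le_of_antitoneOn_of_le_const {F : ℝ → ℝ≥0} {G : ℝ → ℝ≥0∞} {C : ℝ≥0}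
    {a b p q : ℝ} (hF : AntitoneOn F (Ioc a b)) (hFC : ∀ s, F s ≤ C)
    (hG : AEMeasurable G (volume.restrict (Ioc a b))) (hp : 0 < p) (hpq : p ≤ q)
    (h : ∀ s ∈ Icc a b, ∫⁻ t in Ioc a s, (F t : ℝ≥0∞) ^ p ≤ ∫⁻ t in Ioc a s, G t ^ p) :
    ∫⁻ s in Ioc a b, (F s : ℝ≥0∞) ^ q ≤ ∫⁻ s in Ioc a b, G s ^ q := by
  have hqp : 0 ≤ q - p := sub_nonneg.2 hpq
  have hF_meas := (aemeasurable_restrict_of_antitoneOn (μ := volume) measurableSet_Ioc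
    hF).coe_nnreal_ennreal
  have h_top : ∫⁻ s in Ioc a b, (F s : ℝ≥0∞) ^ q ≠ ∞ := by
    refine ne_top_of_le_ne_top (b := ∫⁻ _ in Ioc a b, (C : ℝ≥0∞) ^ q) ?_ ?_
    · simpa using ENNReal.mul_ne_top
        (ENNReal.rpow_ne_top_of_nonneg (hp.le.trans hpq) ENNReal.coe_ne_top) ENNReal.ofReal_ne_top
    · gcongr
      · exact hp.le.trans hpq
      · exact hFC _
  refine lintegral_rpow_le_of_le_lintegral_mul_rpow hF_meas hG hp hpq h_top ?_
  have h_weight : AntitoneOn (fun s ↦ F s ^ (q - p)) (Ioc a b) := fun s hs t ht hst ↦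
    NNReal.rpow_le_rpow (hF hs ht hst) hqp
  have := setLIntegral_mul_le_of_antitoneOn (hF_meas.pow_const p) (hG.pow_const p) h_weight h
  simpa only [ENNReal.coe_rpow_of_nonneg _ hqp, ← ENNReal.rpow_add_of_nonneg _ _ hp.le hqp,
    add_sub_cancel] using this

theorem setLIntegral_rpow_le_of_antitoneOn {F : ℝ → ℝ≥0} {G : ℝ → ℝ≥0∞} {a b p q : ℝ}
    (hF : AntitoneOn F (Ioc a b)) (hG : AEMeasurable G (volume.restrict (Ioc a b)))
    (hp : 0 < p) (hpq : p ≤ q)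
    (h : ∀ s ∈ Icc a b, ∫⁻ t in Ioc a s, (F t : ℝ≥0∞) ^ p ≤ ∫⁻ t in Ioc a s, G t ^ p) :
    ∫⁻ s in Ioc a b, (F s : ℝ≥0∞) ^ q ≤ ∫⁻ s in Ioc a b, G s ^ q := by
  have hF_min (n : ℕ) : AntitoneOn (fun s ↦ min (F s) n) (Ioc a b) := hF.min antitoneOn_const
  have h_min (n : ℕ) :
      ∫⁻ s in Ioc a b, ((min (F s) n : ℝ≥0) : ℝ≥0∞) ^ q ≤ ∫⁻ s in Ioc a b, G s ^ q := by
    refine setLIntegral_rpow_le_of_antitoneOn_of_le_const (hF_min n) (fun _ ↦ min_le_right _ _)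
      hG hp hpq fun s hs ↦ (lintegral_mono fun t ↦ ?_).trans (h s hs)
    gcongr
    exact min_le_left _ _
  refine le_of_tendsto' (lintegral_tendsto_of_tendsto_of_monotone
    (fun n ↦ (aemeasurable_restrict_of_antitoneOn measurableSet_Ioc
      (hF_min n)).coe_nnreal_ennreal.pow_const q) ?_ ?_) h_min
  · refine .of_forall fun s m n hmn ↦ ?_
    have hq : 0 ≤ q := hp.le.trans hpq
    dsimp only
    gcongr
  · refine .of_forall fun s ↦ tendsto_const_nhds.congr' ?_
    filter_upwards [eventually_ge_atTop ⌈F s⌉₊] with n hn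
    rw [min_eq_left (Nat.ceil_le.1 hn)]

end Majorization

lemma ofReal_integral_norm_rpow_eq_lintegral_enorm {α E : Type*} [MeasurableSpace α]
    [NormedAddCommGroup E] {μ : Measure α} {f : α → E} {r : ℝ} (hr : 0 < r)
    (hf : MemLp f (ENNReal.ofReal r) μ) :
    ENNReal.ofReal (∫ x, ‖f x‖ ^ r ∂μ) = ∫⁻ x, ‖f x‖ₑ ^ r ∂μ := by
  have h_int : Integrable (fun x ↦ ‖f x‖ ^ r) μ := by
    simpa [hr.le] using hf.integrable_norm_rpow (by simpa using hr) ENNReal.ofReal_ne_top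
  rw [ofReal_integral_eq_lintegral_ofReal h_int (.of_forall fun _ ↦ by positivity)]
  simp only [← ENNReal.ofReal_rpow_of_nonneg (norm_nonneg _) hr.le, ofReal_norm]

section HardyLittlewoodPolya

variable {α E : Type*} [MeasurableSpace α] [NormedAddCommGroup E] {μ : Measure α}
  [IsFiniteMeasure μ] {f : α → E} {r s : ℝ}

lemma lintegral_enorm_decreasingRearrangement_rpow (hf : AEStronglyMeasurable f μ) :
    ∫⁻ s in Ioc 0 (μ.real univ), ‖decreasingRearrangement μ f s‖ₑ ^ r = ∫⁻ x, ‖f x‖ₑ ^ r ∂μ := by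
  simpa using ((identDistrib_decreasingRearrangement hf).comp
    (measurable_enorm.pow_const r)).lintegral_eq

lemma ofReal_integral_decreasingRearrangement_rpow (hr : 0 < r)
    (hf : MemLp f (ENNReal.ofReal r) μ) (hs : s ∈ Icc 0 (μ.real univ)) :
    ENNReal.ofReal (∫ t in 0..s, decreasingRearrangement μ f t ^ r) =
      ∫⁻ t in Ioc 0 s, ‖decreasingRearrangement μ f t‖ₑ ^ r := by
  have h_memLp : MemLp (decreasingRearrangement μ f) (ENNReal.ofReal r)
      (volume.restrict (Ioc 0 (μ.real univ))) :=
    (identDistrib_decreasingRearrangement hf.aestronglyMeasurable).memLp_iff.2 hf.norm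
  rw [intervalIntegral.integral_of_le hs.1, ← ofReal_integral_norm_rpow_eq_lintegral_enorm hr
    (h_memLp.mono_measure (Measure.restrict_mono_set _ (Ioc_subset_Ioc_right hs.2)))]
  simp only [Real.norm_of_nonneg decreasingRearrangement_nonneg]

theorem hardy_littlewood_polya_general {E' : Type*} [NormedAddCommGroup E'] {g : α → E'}
    {p q : ℝ} (hp : 0 < p) (hpq : p ≤ q)
    (hf : MemLp f (ENNReal.ofReal p) μ) (hg : MemLp g (ENNReal.ofReal q) μ)
    (h : ∀ s ∈ Icc 0 (μ.real univ), ∫ t in 0..s, decreasingRearrangement μ f t ^ p ≤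
      ∫ t in 0..s, decreasingRearrangement μ g t ^ p) :
    MemLp f (ENNReal.ofReal q) μ ∧ ∫ x, ‖f x‖ ^ q ∂μ ≤ ∫ x, ‖g x‖ ^ q ∂μ := by
  have hq : 0 < q := hp.trans_le hpq
  have hf_meas := hf.aestronglyMeasurable
  have hg_meas := hg.aestronglyMeasurable
  have hg_p : MemLp g (ENNReal.ofReal p) μ := hg.mono_exponent (ENNReal.ofReal_le_ofReal hpq)
  have h_anti : AntitoneOn (fun s ↦ ‖decreasingRearrangement μ f s‖₊) (Ioc 0 (μ.real univ)) :=
    fun s hs t ht hst ↦ abs_le_abs_of_nonneg decreasingRearrangement_nonneg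
      (antitoneOn_decreasingRearrangement hf_meas hs.1 ht.1 hst)
  have h_le : ∫⁻ x, ‖f x‖ₑ ^ q ∂μ ≤ ∫⁻ x, ‖g x‖ₑ ^ q ∂μ := by
    rw [← lintegral_enorm_decreasingRearrangement_rpow hf_meas,
      ← lintegral_enorm_decreasingRearrangement_rpow hg_meas]
    refine setLIntegral_rpow_le_of_antitoneOn h_anti
      (identDistrib_decreasingRearrangement hg_meas).aemeasurable_fst.enorm hp hpq fun s hs ↦ ?_
    simp only [← enorm_eq_nnnorm, ← ofReal_integral_decreasingRearrangement_rpow hp hf hs,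
      ← ofReal_integral_decreasingRearrangement_rpow hp hg_p hs]
    exact ENNReal.ofReal_le_ofReal (h s hs)
  have hf_q : MemLp f (ENNReal.ofReal q) μ := by
    refine ⟨hf_meas, ?_⟩
    have hg_top := hg.eLpNorm_lt_top
    rw [eLpNorm_lt_top_iff_lintegral_rpow_enorm_lt_top (by simpa using hq) ENNReal.ofReal_ne_top,
      ENNReal.toReal_ofReal hq.le] at hg_top ⊢
    exact h_le.trans_lt hg_top
  refine ⟨hf_q, (ENNReal.ofReal_le_ofReal_iff (by positivity)).1 ?_⟩
  rwa [ofReal_integral_norm_rpow_eq_lintegral_enorm hq hf_q,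
    ofReal_integral_norm_rpow_eq_lintegral_enorm hq hg]

end HardyLittlewoodPolya

/-- Hardy–Littlewood–Pólya. Let `M > 0`, `0 < q₁ ≤ q₂`, and
`f, g ∈ L^{q₂}([0,M])` with decreasing rearrangements `f*`, `g*`. If
`∫₀^s (f*)^{q₁} ≤ ∫₀^s (g*)^{q₁}` for all `0 ≤ s ≤ M`, then
`∫₀^M |f|^{q₂} ≤ ∫₀^M |g|^{q₂}`. -/
theorem hardy_littlewood_polya (M q₁ q₂ : ℝ) (hM : 0 < M)
    (hq1 : 0 < q₁) (hq12 : q₁ ≤ q₂)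
    (f g : ℝ → ℝ)
    (hf : MemLp f (ENNReal.ofReal q₂) (volume.restrict (Icc (0 : ℝ) M)))
    (hg : MemLp g (ENNReal.ofReal q₂) (volume.restrict (Icc (0 : ℝ) M)))
    (h : ∀ s : ℝ, 0 ≤ s → s ≤ M →
      ∫ t in (0 : ℝ)..s, decRearr1D M f t ^ q₁ ≤ ∫ t in (0 : ℝ)..s, decRearr1D M g t ^ q₁) :
    ∫ s in (0 : ℝ)..M, |f s| ^ q₂ ≤ ∫ s in (0 : ℝ)..M, |g s| ^ q₂ := by
  simp only [decRearr1D_eq_decreasingRearrangement] at h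
  have := (hardy_littlewood_polya_general hq1 hq12
    (hf.mono_exponent (ENNReal.ofReal_le_ofReal hq12)) hg
    fun s hs ↦ h s hs.1 (by simpa [hM.le] using hs.2)).2
  simpa only [← Real.norm_eq_abs, intervalIntegral.integral_of_le hM.le,
    ← integral_Icc_eq_integral_Ioc] using this
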